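/- Let T ∈ 𝓔^ω be orientation-preserving with T(π(0)) = π(0) and let f ∈ 𝓒^1. If (f,T) has a unique maximizing measure, then either T|K(f,T) is Sturmian-like or f has a supercritical value (i.e., K(f,T) has an f-supercritical value). -/

import Mathlib

/-!
Suppose `f` has no supercritical value, and let `K = K(f,T)`; a nonempty `K` provides a Lipschitz
calibrated sub-action `g`.

*`K` is a single `Λ_g`.* If `g'` is another calibrated sub-action and `g - g'` is maximal at `x₀`,
it stays maximal along a `g`-calibrated backward orbit of `x₀`, and a limit of empirical measures
along this orbit is a maximizing measure integrating `g - g'` to its maximum. In the same way the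
minimum of `g - g'` is its integral against a maximizing measure. Uniqueness of that measure forces
`g - g'` to be constant (`calibrated_unique`), so `Λ_{g'} = Λ_g` and `K = Λ_g`. Hence `K` is closed,
contained in `E_g`, and every point of `K` has a preimage in `K`.

*Minimality.* If the backward orbit of `x` along the word `i` lies in `K`, adding up the sub-action
inequalities along `τ_{i,n}(y)` and the equalities along `τ_{i,n}(x)`, and letting `n → ∞`, gives
`h_i(y) - h_i(x) ≤ g(y) - g(x)` for all `y` (`hSum_sub_le`).

*One-sided limits.* Let `y_n ∈ K` tend to `x` from the right with words `i_n → i`. Minimality at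
`y_n` for `i_n` and at `x` for any word `j` of `x` yields
`h_j(y_n) - h_j(x) ≤ h_{i_n}(y_n) - h_{i_n}(x)`; since `h_i'(x)` is jointly continuous in `(i, x)`,
`h_j'(x) ≤ h_i'(x)` (`exists_extremal_word`). As `x` is not supercritical, all words maximizing
`h_i'(x)` share their first letter, so all points of `K` close to `x` on the right have this first
letter only, i.e. their unique preimage in `K` is given by one inverse branch
(`exists_side_letter`). The left side is symmetric, with minimal instead of maximal derivative.
Thus every point of `K` is regular (`isRegular_of_side_letters`).
-/

open MeasureTheory Topology Filter Set
open scoped UniformConvergence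

noncomputable section

/-- The circle `ℝ/ℤ`. -/
abbrev Circle1 : Type := AddCircle (1 : ℝ)

/-- The canonical representative in `[0,1)` of a point of `ℝ/ℤ`. -/
noncomputable def rep (z : Circle1) : ℝ := (AddCircle.equivIco 1 0 z : ℝ)

/-- The circle map induced by a lift `F : ℝ → ℝ`. -/
noncomputable def cmap (F : ℝ → ℝ) : Circle1 → Circle1 := fun z => ((F (rep z) : ℝ) : Circle1)

/-- The data determining the `C^r` topology: all derivatives of order `≤ r`, viewed in the
space of functions `ℝ → ℝ` with the uniform-convergence topology. -/
noncomputable def crSeq (r : ℕ∞) (f : ℝ → ℝ) : ℕ → (ℝ →ᵤ ℝ) :=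
  fun k => UniformFun.ofFun (if (k : ℕ∞) ≤ r then iteratedDeriv k f else 0)

/-- The space `𝓒^r` of `C^r` functions `ℝ/ℤ → ℝ`. -/
def CrFun (r : ℕ∞) : Type := {f : Circle1 → ℝ // ContDiff ℝ r fun x : ℝ => f ↑x}

/-- The `C^r` topology on `𝓒^r`. -/
noncomputable instance (r : ℕ∞) : TopologicalSpace (CrFun r) :=
  TopologicalSpace.induced (fun f : CrFun r => crSeq r fun x : ℝ => f.1 ↑x) inferInstance

/-- `F : ℝ → ℝ` is a lift of a `C^r` expanding circle map: it is `C^r`, sends `x+1` to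
`F x + d` for a fixed integer `d`, and `|(Fⁿ)'| ≥ C λⁿ` for some `C > 0`, `λ > 1`. -/
def ExpandingLift (r : ℕ∞) (F : ℝ → ℝ) : Prop :=
  ContDiff ℝ r F ∧ (∃ d : ℤ, ∀ x : ℝ, F (x + 1) = F x + d) ∧
    ∃ C > (0 : ℝ), ∃ l > (1 : ℝ), ∀ n : ℕ, 1 ≤ n → ∀ x : ℝ, C * l ^ n ≤ |deriv (F^[n]) x|

/-- The space `𝓔^r` of (lifts of) `C^r` expanding circle maps, with the `C^r` topology. -/
def ExpMap (r : ℕ∞) : Type := {F : ℝ → ℝ // ExpandingLift r F}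

noncomputable instance (r : ℕ∞) : TopologicalSpace (ExpMap r) :=
  TopologicalSpace.induced (fun F : ExpMap r => crSeq r F.1) inferInstance

/-- `μ` is a `T`-invariant Borel probability measure. -/
def InvProb (T : Circle1 → Circle1) (μ : Measure Circle1) : Prop :=
  IsProbabilityMeasure μ ∧ μ.map T = μ

/-- `β(f,T)`, the maximal ergodic average. -/
noncomputable def beta (f : Circle1 → ℝ) (T : Circle1 → Circle1) : ℝ :=
  sSup ((fun μ : Measure Circle1 => ∫ x, f x ∂μ) '' {μ | InvProb T μ})

/-- `μ` is a maximizing measure for `(f,T)`. -/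
def IsMaximizing (f : Circle1 → ℝ) (T : Circle1 → Circle1) (μ : Measure Circle1) : Prop :=
  InvProb T μ ∧ ∫ x, f x ∂μ = beta f T

/-- `μ` is a periodic measure: an invariant measure supported on a periodic orbit. -/
def IsPeriodicMeasure (T : Circle1 → Circle1) (μ : Measure Circle1) : Prop :=
  InvProb T μ ∧ ∃ x : Circle1, ∃ n : ℕ, 0 < n ∧ T^[n] x = x ∧
    μ (Set.range fun k : ℕ => T^[k] x) = 1

/-- `(f,T)` is uniquely maximized by a periodic measure. -/
def UniqMaxPeriodic (f : Circle1 → ℝ) (T : Circle1 → Circle1) : Prop :=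
  ∃ μ : Measure Circle1, IsMaximizing f T μ ∧ IsPeriodicMeasure T μ ∧
    ∀ ν : Measure Circle1, IsMaximizing f T ν → ν = μ

/-- A (continuous) sub-action for `(f,T)`. -/
def IsSubaction (f : Circle1 → ℝ) (T : Circle1 → Circle1) (g : Circle1 → ℝ) : Prop :=
  Continuous g ∧ ∀ x, g x + f x ≤ g (T x) + beta f T

/-- A calibrated sub-action for `(f,T)`. -/
def IsCalibrated (f : Circle1 → ℝ) (T : Circle1 → Circle1) (g : Circle1 → ℝ) : Prop :=
  IsSubaction f T g ∧ ∀ x, ∃ y, T y = x ∧ g y + f y = g x + beta f T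

/-- `G_{f,T}`: the set of Lipschitz calibrated sub-actions of `(f,T)`. -/
def Gset (f : Circle1 → ℝ) (T : Circle1 → Circle1) : Set (Circle1 → ℝ) :=
  {g | (∃ K : NNReal, LipschitzWith K g) ∧ IsCalibrated f T g}

/-- The set `E_{f,T,g}`. -/
def Eset (f : Circle1 → ℝ) (T : Circle1 → Circle1) (g : Circle1 → ℝ) : Set Circle1 :=
  {x | g x + f x = g (T x) + beta f T}

/-- The set `Λ*_{f,T,g}`. -/
def LambdaStar (f : Circle1 → ℝ) (T : Circle1 → Circle1) (g : Circle1 → ℝ) : Set Circle1 :=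
  {x | ∀ n : ℕ, T^[n] x ∈ Eset f T g}

/-- The set `Λ_{f,T,g}`. -/
def Lambda (f : Circle1 → ℝ) (T : Circle1 → Circle1) (g : Circle1 → ℝ) : Set Circle1 :=
  ⋂ n : ℕ, T^[n] '' LambdaStar f T g

/-- The set `K(f,T)`. -/
def Kset (f : Circle1 → ℝ) (T : Circle1 → Circle1) : Set Circle1 :=
  ⋃ g ∈ Gset f T, Lambda f T g

/-- The `(f,T)`-non-wandering set `Ω(f,T)`. -/
def OmegaSet (f : Circle1 → ℝ) (T : Circle1 → Circle1) : Set Circle1 :=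
  {x | ∀ ε > (0 : ℝ), ∃ n : ℕ, 1 ≤ n ∧ ∃ z : Circle1, T^[n] z = x ∧ dist z x < ε ∧
    |∑ i ∈ Finset.range n, (f (T^[i] z) - beta f T)| < ε}

/-- `A` is a periodic orbit of `T`. -/
def IsPeriodicOrbit (T : Circle1 → Circle1) (A : Set Circle1) : Prop :=
  ∃ x : Circle1, (∃ n : ℕ, 0 < n ∧ T^[n] x = x) ∧ A = Set.range fun k : ℕ => T^[k] x

/-- `A` is a `T`-minimal set: a nonempty compact invariant set with no proper nonempty
compact invariant subset. -/
def IsMinimalSet (T : Circle1 → Circle1) (A : Set Circle1) : Prop :=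
  A.Nonempty ∧ IsCompact A ∧ T '' A ⊆ A ∧
    ∀ B ⊆ A, B.Nonempty → IsCompact B → T '' B ⊆ B → B = A

/-- The space of `C^r` families of functions on the circle with `q` parameters,
i.e. maps `(t,x) ↦ f_t(x)` that are jointly `C^r` (the circle variable via a lift). -/
def FamFun (r : ℕ∞) (q : ℕ) : Type :=
  {G : ((Fin q → ℝ) × ℝ) → ℝ // ContDiff ℝ r G ∧ ∀ t x, G (t, x + 1) = G (t, x)}

noncomputable def famSeq (r : ℕ∞) (q : ℕ) (G : ((Fin q → ℝ) × ℝ) → ℝ) :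
    (k : ℕ) → (((Fin q → ℝ) × ℝ) →ᵤ (((Fin q → ℝ) × ℝ) [×k]→L[ℝ] ℝ)) :=
  fun k => UniformFun.ofFun (if (k : ℕ∞) ≤ r then iteratedFDeriv ℝ k G else 0)

/-- The `C^r` topology on the space of `C^r` families. -/
noncomputable instance (r : ℕ∞) (q : ℕ) : TopologicalSpace (FamFun r q) :=
  TopologicalSpace.induced (fun G : FamFun r q => famSeq r q G.1) inferInstance

/-- The member `f_t : ℝ/ℤ → ℝ` of a family, at the parameter `t`. -/
noncomputable def famMem {r : ℕ∞} {q : ℕ} (G : FamFun r q) (t : Fin q → ℝ) : Circle1 → ℝ :=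
  fun z => G.1 (t, rep z)

/-- The product `m_∞` over `ℕ` of Lebesgue measure on `[0,1]`, realised as the pushforward of
the Haar probability measure of the compact group `(ℝ/ℤ)^ℕ` under the coordinatewise choice of
representatives in `[0,1)`. -/
noncomputable def mInfty : Measure (ℕ → ℝ) :=
  Measure.map (fun (t : ℕ → Circle1) (n : ℕ) => rep (t n))
    (MeasureTheory.Measure.addHaarMeasure (⊤ : TopologicalSpace.PositiveCompacts (ℕ → Circle1)))

/-- `S` is an `N`-dimensionally shy subset of a normed real vector space `V`. -/
def NDimShy {V : Type*} [NormedAddCommGroup V] [NormedSpace ℝ V] (N : ℕ) (S : Set V) : Prop :=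
  ∃ φ : Fin N → V, ∀ f : V,
    volume {t : Fin N → ℝ | (∀ i, t i ∈ Set.Icc (0 : ℝ) 1) ∧ f + ∑ i, t i • φ i ∈ S} = 0

/-- `S` is a finite dimensionally shy subset of a normed real vector space `V`. -/
def FinDimShy {V : Type*} [NormedAddCommGroup V] [NormedSpace ℝ V] (S : Set V) : Prop :=
  ∃ N : ℕ, 0 < N ∧ NDimShy N S

/-- `S` is a shy subset of `V`: there are a compactly supported Borel probability measure `μ`
on `V` and a Borel set `S̃ ⊇ S` all of whose translates are `μ`-null. -/
def IsShy {V : Type*} [NormedAddCommGroup V] [NormedSpace ℝ V] (S : Set V) : Prop :=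
  letI : MeasurableSpace V := borel V
  ∃ μ : Measure V, μ Set.univ = 1 ∧ (∃ K : Set V, IsCompact K ∧ μ K = 1) ∧
    ∃ St : Set V, MeasurableSet St ∧ S ⊆ St ∧
      ∀ v : V, μ ((fun x => x + v) ⁻¹' St) = 0

/-- `S` is a prevalent subset of `V`. -/
def IsPrevalent {V : Type*} [NormedAddCommGroup V] [NormedSpace ℝ V] (S : Set V) : Prop :=
  IsShy Sᶜ

/-- `F` is the (normalized) lift of an orientation-preserving real analytic expanding circle
map of degree `d` fixing `π(0)`. -/
def AnalyticExpandingLift (F : ℝ → ℝ) (d : ℕ) : Prop :=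
  (∀ x : ℝ, AnalyticAt ℝ F x) ∧ (∀ x : ℝ, F (x + 1) = F x + d) ∧ StrictMono F ∧ F 0 = 0 ∧
    2 ≤ d ∧ ∃ C > (0 : ℝ), ∃ l > (1 : ℝ), ∀ n : ℕ, 1 ≤ n → ∀ x : ℝ, C * l ^ n ≤ |deriv (F^[n]) x|

/-- The inverse branches `τ_{i,n} = τ_{i_n} ∘ ⋯ ∘ τ_{i_1}`, where `τ = F⁻¹` and
`τ_i(x) = τ(x+i)`; the word `i` is indexed from `0`, so `i 0` is the first letter `i_1`. -/
noncomputable def tauIter (F : ℝ → ℝ) {d : ℕ} (i : ℕ → Fin d) : ℕ → ℝ → ℝ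
  | 0, x => x
  | n + 1, x => Function.invFun F (tauIter F i n x + ((i n : ℕ) : ℝ))

/-- The function `h^f_i` associated to an infinite word `i`. -/
noncomputable def hSum (F : ℝ → ℝ) {d : ℕ} (i : ℕ → Fin d) (f : Circle1 → ℝ) : ℝ → ℝ :=
  fun x => ∑' n : ℕ,
    (f ((tauIter F i (n + 1) x : ℝ) : Circle1) - f ((tauIter F i (n + 1) 0 : ℝ) : Circle1))

/-- The function `h^f_i` associated to a finite word of length `m` (the first `m` letters
of `i`). -/
noncomputable def hSumFin (F : ℝ → ℝ) {d : ℕ} (i : ℕ → Fin d) (m : ℕ) (f : Circle1 → ℝ) :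
    ℝ → ℝ :=
  fun x => ∑ n ∈ Finset.range m,
    (f ((tauIter F i (n + 1) x : ℝ) : Circle1) - f ((tauIter F i (n + 1) 0 : ℝ) : Circle1))

/-- `i ∈ CL(x,K)`: all backward images of `x` along the word `i` lie over `K`. -/
def WordIn (F : ℝ → ℝ) {d : ℕ} (i : ℕ → Fin d) (x : ℝ) (K : Set Circle1) : Prop :=
  ∀ n : ℕ, 1 ≤ n → ((tauIter F i n x : ℝ) : Circle1) ∈ K

/-- `x` (a real, lying over `K`) is an `f`-supercritical value of `K`. -/
def IsSupercriticalValue (F : ℝ → ℝ) (d : ℕ) (f : Circle1 → ℝ) (K : Set Circle1) (x : ℝ) :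
    Prop :=
  ((x : ℝ) : Circle1) ∈ K ∧ ∃ i j : ℕ → Fin d, WordIn F i x K ∧ WordIn F j x K ∧ i 0 ≠ j 0 ∧
    deriv (hSum F i f) x = deriv (hSum F j f) x

/-- `x` is a critical value of `T|K`. -/
def IsCriticalValue (T : Circle1 → Circle1) (K : Set Circle1) (x : Circle1) : Prop :=
  x ∈ K ∧ ∃ y z, y ∈ K ∧ z ∈ K ∧ y ≠ z ∧ T y = x ∧ T z = x

/-- A critical value `x` of `T|K` is regular: on each side of `x` there is a continuous
inverse branch of `T` selecting the unique preimage in `K`. -/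
def IsRegularCriticalValue (T : Circle1 → Circle1) (K : Set Circle1) (x : Circle1) : Prop :=
  ∃ U : Set Circle1, U ∈ 𝓝 x ∧ IsConnected U ∧
    ∀ b ∈ U \ {x}, ∃ s : Circle1 → Circle1,
      ContinuousOn s (connectedComponentIn (U \ {x}) b) ∧
      (∀ y ∈ connectedComponentIn (U \ {x}) b, T (s y) = y) ∧
      (∀ y ∈ K ∩ connectedComponentIn (U \ {x}) b, T ⁻¹' {y} ∩ K = {s y})

/-- `T|K` is Sturmian-like: every critical value is regular. -/
def SturmianLike (T : Circle1 → Circle1) (K : Set Circle1) : Prop :=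
  ∀ x, IsCriticalValue T K x → IsRegularCriticalValue T K x

/-- `f : ℝ/ℤ → ℝ` is a trigonometric polynomial. -/
def IsTrigPoly (f : Circle1 → ℝ) : Prop :=
  ∃ m : ℕ, ∃ a b : ℕ → ℝ, ∀ x : ℝ,
    f ↑x = a 0 + ∑ k ∈ Finset.range m,
      (a (k + 1) * Real.cos (2 * Real.pi * (k + 1) * x) +
        b (k + 1) * Real.sin (2 * Real.pi * (k + 1) * x))

end

/-! ### Limits of empirical measures along backward orbits -/

/-- Krylov–Bogoliubov along a backward orbit: an ultrafilter limit of the empirical measures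
`(N+1)⁻¹ ∑_{k ≤ N} δ_{x k}` is invariant, and it integrates to `c` every continuous `φ` whose
Birkhoff averages along the orbit converge to `c`. -/
lemma exists_invProb_of_backward_orbit (T : Circle1 → Circle1) (hT : Continuous T)
    (x : ℕ → Circle1) (hx : ∀ n, T (x (n + 1)) = x n) :
    ∃ μ : Measure Circle1, InvProb T μ ∧ ∀ (φ : Circle1 → ℝ) (c : ℝ), Continuous φ →
      Tendsto (fun N : ℕ => ((N : ℝ) + 1)⁻¹ * ∑ k ∈ Finset.range (N + 1), φ (x k)) atTop (𝓝 c) →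
      ∫ z, φ z ∂μ = c := by
  let emp : ℕ → Measure Circle1 := fun N =>
    ((N : ENNReal) + 1)⁻¹ • ∑ k ∈ Finset.range (N + 1), Measure.dirac (x k)
  have hemp : ∀ N, IsProbabilityMeasure (emp N) := by
    intro N
    constructor
    simp only [emp, Measure.smul_apply, Measure.coe_finsetSum, Finset.sum_apply, measure_univ,
      Finset.sum_const, Finset.card_range, smul_eq_mul, nsmul_eq_mul, mul_one]
    push_cast
    exact ENNReal.inv_mul_cancel (by simp) (by finiteness)
  have hint : ∀ N (φ : Circle1 → ℝ), Continuous φ →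
      ∫ z, φ z ∂(emp N) = ((N : ℝ) + 1)⁻¹ * ∑ k ∈ Finset.range (N + 1), φ (x k) := by
    intro N φ hφ
    simp only [emp]
    rw [integral_smul_measure, integral_finsetSum_measure]
    · simp only [integral_dirac, smul_eq_mul]
      congr 1
      rw [ENNReal.toReal_inv, ENNReal.toReal_add (by simp) (by simp)]
      simp
    · intro k _
      exact integrable_dirac (by simp)
  let P : ℕ → ProbabilityMeasure Circle1 := fun N => ⟨emp N, hemp N⟩
  let U : Ultrafilter ℕ := hyperfilter ℕ
  have hU : (U : Filter ℕ) ≤ atTop := Nat.hyperfilter_le_atTop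
  obtain ⟨ν, -, hν⟩ := (isCompact_univ (X := ProbabilityMeasure Circle1)).ultrafilter_le_nhds
    (U.map P) (by simp)
  have hlim : Tendsto P U (𝓝 ν) := hν
  have hval : ∀ (φ : Circle1 → ℝ) (c : ℝ), Continuous φ →
      Tendsto (fun N : ℕ => ((N : ℝ) + 1)⁻¹ * ∑ k ∈ Finset.range (N + 1), φ (x k)) U (𝓝 c) →
      ∫ z, φ z ∂(ν : Measure Circle1) = c := by
    intro φ c hφ hc
    have h1 := (ProbabilityMeasure.tendsto_iff_forall_integral_tendsto.1 hlim)
      (BoundedContinuousFunction.mkOfCompact ⟨φ, hφ⟩)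
    have h2 : ∀ N, ∫ z, (BoundedContinuousFunction.mkOfCompact ⟨φ, hφ⟩) z
        ∂(P N : Measure Circle1) =
        ((N : ℝ) + 1)⁻¹ * ∑ k ∈ Finset.range (N + 1), φ (x k) := fun N => hint N φ hφ
    simp only [h2] at h1
    exact tendsto_nhds_unique h1 hc
  have hvalT : ∀ φ : Circle1 → ℝ, Continuous φ →
      ∫ z, φ (T z) ∂(ν : Measure Circle1) = ∫ z, φ z ∂(ν : Measure Circle1) := by
    intro φ hφ
    have hφT : Continuous fun z => φ (T z) := hφ.comp hT
    -- the Birkhoff sums of `φ ∘ T - φ` telescope, hence stay bounded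
    have h0 : ∫ z, (φ (T z) - φ z) ∂(ν : Measure Circle1) = 0 := by
      refine hval _ 0 (hφT.sub hφ) (Tendsto.mono_left ?_ hU)
      obtain ⟨M, hM⟩ := isCompact_univ.exists_bound_of_continuousOn hφ.continuousOn
      have hinv : Tendsto (fun N : ℕ => ((N : ℝ) + 1)⁻¹ * (2 * M)) atTop (𝓝 0) := by
        simpa [one_div] using
          (tendsto_one_div_add_atTop_nhds_zero_nat (𝕜 := ℝ)).mul_const (2 * M)
      refine squeeze_zero_norm (fun N => ?_) hinv
      have htel : ∑ k ∈ Finset.range (N + 1), (φ (T (x k)) - φ (x k))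
          = φ (T (x 0)) - φ (x N) := by
        induction N with
        | zero => simp
        | succ N ih => rw [Finset.sum_range_succ, ih, hx]; ring
      rw [htel, norm_mul, norm_inv, Real.norm_of_nonneg (by positivity : (0:ℝ) ≤ (N:ℝ) + 1)]
      have h1 := hM (T (x 0)) (mem_univ _)
      have h2 := hM (x N) (mem_univ _)
      have h3 := norm_sub_le (φ (T (x 0))) (φ (x N))
      gcongr
      linarith
    have hi : ∀ ψ : Circle1 → ℝ, Continuous ψ → Integrable ψ (ν : Measure Circle1) := by
      intro ψ hψ
      exact (BoundedContinuousFunction.mkOfCompact ⟨ψ, hψ⟩).integrable _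
    rw [integral_sub (hi _ hφT) (hi _ hφ)] at h0
    linarith
  refine ⟨ν, ⟨inferInstance, ?_⟩, fun φ c hφ hc => hval φ c hφ (hc.mono_left hU)⟩
  have : IsProbabilityMeasure ((ν : Measure Circle1).map T) :=
    Measure.isProbabilityMeasure_map hT.measurable.aemeasurable
  apply ext_of_forall_integral_eq_of_IsFiniteMeasure
  intro φ
  rw [integral_map hT.measurable.aemeasurable φ.continuous.aestronglyMeasurable]
  exact hvalT φ φ.continuous

/-- A maximizing measure carried by a backward orbit calibrated by `g`. If moreover the continuous
function `u` is constant along the orbit, the measure integrates `u` to that constant. -/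
lemma exists_maximizing_of_calibrated_orbit {f g u : Circle1 → ℝ} {T : Circle1 → Circle1}
    (hT : Continuous T) (hf : Continuous f) (hg : Continuous g) (hu : Continuous u)
    (x : ℕ → Circle1) (hx : ∀ n, T (x (n + 1)) = x n)
    (hcal : ∀ n, g (x (n + 1)) + f (x (n + 1)) = g (x n) + beta f T)
    (c : ℝ) (hc : ∀ n, u (x n) = c) :
    ∃ μ, IsMaximizing f T μ ∧ ∫ z, u z ∂μ = c := by
  obtain ⟨μ, hμ, hval⟩ := exists_invProb_of_backward_orbit T hT (fun n => x (n + 1))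
    (fun n => hx (n + 1))
  refine ⟨μ, ⟨hμ, ?_⟩, ?_⟩
  · have := hμ.1
    have hi : ∀ ψ : Circle1 → ℝ, Continuous ψ → Integrable ψ μ := fun ψ hψ =>
      (BoundedContinuousFunction.mkOfCompact ⟨ψ, hψ⟩).integrable _
    -- the coboundary `g - g ∘ T` integrates to zero
    have h1 : ∫ z, (f z + (g z - g (T z))) ∂μ = beta f T := by
      refine hval _ _ (hf.add (hg.sub (hg.comp hT))) ?_
      have : ∀ k, f (x (k + 1)) + (g (x (k + 1)) - g (T (x (k + 1)))) = beta f T := by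
        intro k
        rw [hx]
        linarith [hcal k]
      simp only [this, Finset.sum_const, Finset.card_range, nsmul_eq_mul]
      refine tendsto_const_nhds.congr fun N => ?_
      push_cast
      field_simp
    have h2 : ∫ z, g (T z) ∂μ = ∫ z, g z ∂μ := by
      conv_rhs => rw [← hμ.2]
      rw [integral_map hT.measurable.aemeasurable hg.aestronglyMeasurable]
    have hgT : Continuous fun z => g (T z) := hg.comp hT
    have hgd : Continuous fun z => g z - g (T z) := hg.sub hgT
    rw [integral_add (hi _ hf) (hi _ hgd), integral_sub (hi _ hg) (hi _ hgT)] at h1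
    linarith
  · refine hval _ _ hu ?_
    simp only [hc, Finset.sum_const, Finset.card_range, nsmul_eq_mul]
    refine tendsto_const_nhds.congr fun N => ?_
    push_cast
    field_simp

/-- If `g - g'` is maximal at `x₀`, with `g` calibrated and `g'` a sub-action, then it stays maximal
along a `g`-calibrated backward orbit of `x₀`, so some maximizing measure integrates it to its
maximum. -/
lemma exists_maximizing_integral_eq_max {f g g' : Circle1 → ℝ} {T : Circle1 → Circle1}
    (hT : Continuous T) (hf : Continuous f) (hg : IsCalibrated f T g) (hg' : IsSubaction f T g')
    (x₀ : Circle1) (hmax : ∀ z, g z - g' z ≤ g x₀ - g' x₀) :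
    ∃ μ, IsMaximizing f T μ ∧ ∫ z, (g z - g' z) ∂μ = g x₀ - g' x₀ := by
  choose p hp1 hp2 using hg.2
  have hx : ∀ n, p^[n + 1] x₀ = p (p^[n] x₀) := fun n => Function.iterate_succ_apply' _ _ _
  refine exists_maximizing_of_calibrated_orbit hT hf hg.1.1 (hg.1.1.sub hg'.1)
    (fun n => p^[n] x₀) (fun n => ?_) (fun n => ?_) _ (fun n => ?_)
  · simp only [hx, hp1]
  · simp only [hx, hp2]
  · induction n with
    | zero => rfl
    | succ n ih =>
      have h1 := hp2 (p^[n] x₀)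
      have h2 := hg'.2 (p (p^[n] x₀))
      rw [hp1] at h2
      have h3 := hmax (p (p^[n] x₀))
      simp only [Pi.sub_apply, hx] at *
      linarith

/-- If the maximizing measure is unique, calibrated sub-actions are unique up to a constant:
the maximum and the minimum of the difference are both the integral of the difference against
a maximizing measure. -/
lemma calibrated_unique {f : Circle1 → ℝ} {T : Circle1 → Circle1} (hT : Continuous T)
    (hf : Continuous f) (huniq : ∃! μ : Measure Circle1, IsMaximizing f T μ)
    {g g' : Circle1 → ℝ} (hg : IsCalibrated f T g) (hg' : IsCalibrated f T g') :
    ∃ c, ∀ z, g' z = g z + c := by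
  have hc : Continuous fun z => g z - g' z := hg.1.1.sub hg'.1.1
  obtain ⟨a, -, ha⟩ := isCompact_univ.exists_isMaxOn univ_nonempty hc.continuousOn
  obtain ⟨b, -, hb⟩ := isCompact_univ.exists_isMinOn univ_nonempty hc.continuousOn
  have ha' : ∀ z, g z - g' z ≤ g a - g' a := fun z => ha (mem_univ z)
  have hb' : ∀ z, g b - g' b ≤ g z - g' z := fun z => hb (mem_univ z)
  obtain ⟨μ, hμ, hμa⟩ := exists_maximizing_integral_eq_max hT hf hg hg'.1 a ha'
  obtain ⟨ν, hν, hνb⟩ := exists_maximizing_integral_eq_max hT hf hg' hg.1 b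
    (fun z => by linarith [hb' z])
  have hμν : μ = ν := huniq.unique hμ hν
  subst hμν
  have hneg : ∫ z, (g' z - g z) ∂μ = - ∫ z, (g z - g' z) ∂μ := by
    rw [← integral_neg]
    simp
  refine ⟨g' a - g a, fun z => ?_⟩
  linarith [ha' z, hb' z]

/-! ### The set `K(f,T)` -/

lemma Lambda_subset_Eset (f : Circle1 → ℝ) (T : Circle1 → Circle1) (g : Circle1 → ℝ) :
    Lambda f T g ⊆ Eset f T g := by
  intro x hx
  obtain ⟨y, hy, rfl⟩ := mem_iInter.1 hx 0
  exact hy 0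

lemma isClosed_LambdaStar {f g : Circle1 → ℝ} {T : Circle1 → Circle1} (hT : Continuous T)
    (hf : Continuous f) (hg : Continuous g) : IsClosed (LambdaStar f T g) := by
  have hE : IsClosed (Eset f T g) :=
    isClosed_eq (hg.add hf) ((hg.comp hT).add continuous_const)
  have : LambdaStar f T g = ⋂ n, T^[n] ⁻¹' Eset f T g := by
    ext x
    simp [LambdaStar]
  rw [this]
  exact isClosed_iInter fun n => hE.preimage (hT.iterate n)

lemma isClosed_image_LambdaStar {f g : Circle1 → ℝ} {T : Circle1 → Circle1} (hT : Continuous T)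
    (hf : Continuous f) (hg : Continuous g) (n : ℕ) : IsClosed (T^[n] '' LambdaStar f T g) :=
  ((isClosed_LambdaStar hT hf hg).isCompact.image (hT.iterate n)).isClosed

lemma isClosed_Lambda {f g : Circle1 → ℝ} {T : Circle1 → Circle1} (hT : Continuous T)
    (hf : Continuous f) (hg : Continuous g) : IsClosed (Lambda f T g) :=
  isClosed_iInter fun n => isClosed_image_LambdaStar hT hf hg n

/-- Every point of `Λ` has a preimage in `Λ`. -/
lemma exists_preimage_Lambda {f g : Circle1 → ℝ} {T : Circle1 → Circle1} (hT : Continuous T)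
    (hf : Continuous f) (hg : Continuous g) {x : Circle1} (hx : x ∈ Lambda f T g) :
    ∃ w ∈ Lambda f T g, T w = x := by
  have hcl : ∀ n, IsClosed (T ⁻¹' {x} ∩ T^[n] '' LambdaStar f T g) := fun n =>
    (isClosed_singleton.preimage hT).inter (isClosed_image_LambdaStar hT hf hg n)
  have hne : (⋂ n, T ⁻¹' {x} ∩ T^[n] '' LambdaStar f T g).Nonempty := by
    refine IsCompact.nonempty_iInter_of_sequence_nonempty_isCompact_isClosed _ (fun n => ?_)
      (fun n => ?_) (hcl 0).isCompact hcl
    · refine inter_subset_inter_right _ ?_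
      rintro _ ⟨y, hy, rfl⟩
      exact ⟨T y, fun m => by simpa using hy (m + 1), rfl⟩
    · obtain ⟨y, hy, hyx⟩ := mem_iInter.1 hx (n + 1)
      exact ⟨T^[n] y, by simpa [Function.iterate_succ_apply'] using hyx, y, hy, rfl⟩
  obtain ⟨w, hw⟩ := hne
  rw [mem_iInter] at hw
  exact ⟨w, mem_iInter.2 fun n => (hw n).2, (hw 0).1⟩

lemma Kset_eq_Lambda {f : Circle1 → ℝ} {T : Circle1 → Circle1} (hT : Continuous T)
    (hf : Continuous f) (huniq : ∃! μ : Measure Circle1, IsMaximizing f T μ)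
    {g : Circle1 → ℝ} (hg : g ∈ Gset f T) : Kset f T = Lambda f T g := by
  apply Subset.antisymm
  · refine iUnion₂_subset fun g' hg' => ?_
    obtain ⟨c, hc⟩ := calibrated_unique hT hf huniq hg.2 hg'.2
    have hE : Eset f T g' = Eset f T g := by
      ext x
      simp only [Eset, mem_ofPred_eq, hc]
      constructor <;> intro h <;> linarith
    have : Lambda f T g' = Lambda f T g := by
      simp only [Lambda, LambdaStar, hE]
    exact this.subset
  · exact subset_iUnion₂ (s := fun g (_ : g ∈ Gset f T) => Lambda f T g) g hg

/-! ### The lift and its inverse branches -/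

lemma circle_coe_eq_coe_iff {a b : ℝ} :
    (a : Circle1) = (b : Circle1) ↔ ∃ k : ℤ, a + k = b := by
  rw [← sub_eq_zero, ← AddCircle.coe_sub, AddCircle.coe_eq_zero_iff]
  constructor
  · rintro ⟨n, hn⟩
    refine ⟨-n, ?_⟩
    simp only [zsmul_eq_mul, mul_one] at hn
    push_cast
    linarith
  · rintro ⟨k, hk⟩
    refine ⟨-k, ?_⟩
    simp only [zsmul_eq_mul, mul_one]
    push_cast
    linarith

namespace AnalyticExpandingLift

variable {F : ℝ → ℝ} {d : ℕ}

lemma contDiff (hF : AnalyticExpandingLift F d) : ContDiff ℝ 1 F :=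
  contDiff_iff_contDiffAt.2 fun x => (hF.1 x).contDiffAt

lemma differentiable (hF : AnalyticExpandingLift F d) : Differentiable ℝ F :=
  hF.contDiff.differentiable one_ne_zero

lemma continuous (hF : AnalyticExpandingLift F d) : Continuous F :=
  hF.contDiff.continuous

lemma continuous_deriv (hF : AnalyticExpandingLift F d) : Continuous (deriv F) :=
  hF.contDiff.continuous_deriv le_rfl

lemma add_int (hF : AnalyticExpandingLift F d) (x : ℝ) (k : ℤ) : F (x + k) = F x + d * k := by
  have h : ∀ x, F (x + 1) = F x + d := hF.2.1
  induction k using Int.induction_on with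
  | zero => simp
  | succ n ih =>
    push_cast at ih ⊢
    rw [← add_assoc, h, ih]
    ring
  | pred n ih =>
    have := h (x + (-(n : ℝ) - 1))
    push_cast at ih ⊢
    rw [show x + (-(n : ℝ) - 1) + 1 = x + -(n : ℝ) by ring, ih] at this
    linarith

lemma iterate_add_int (hF : AnalyticExpandingLift F d) (n : ℕ) (x : ℝ) (k : ℤ) :
    F^[n] (x + k) = F^[n] x + d ^ n * k := by
  induction n generalizing x k with
  | zero => simp
  | succ n ih =>
    rw [Function.iterate_succ_apply, Function.iterate_succ_apply, hF.add_int]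
    have := ih (F x) (d * k)
    push_cast at this
    rw [this]
    ring

lemma injective (hF : AnalyticExpandingLift F d) : Function.Injective F := hF.2.2.1.injective

lemma surjective (hF : AnalyticExpandingLift F d) : Function.Surjective F := by
  have hd : (2 : ℝ) ≤ d := by exact_mod_cast hF.2.2.2.2.1
  have h0 : F 0 = 0 := hF.2.2.2.1
  intro y
  obtain ⟨n, hn⟩ := exists_nat_ge |y|
  have h1 := hF.add_int 0 n
  have h2 := hF.add_int 0 (-n)
  push_cast at h1 h2
  simp only [zero_add, h0] at h1 h2
  have hn0 : (0 : ℝ) ≤ n := n.cast_nonneg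
  have hy := abs_le.1 hn
  have := intermediate_value_Icc (a := -(n : ℝ)) (b := n) (by linarith) hF.continuous.continuousOn
  obtain ⟨x, -, hx⟩ := this (show y ∈ Icc (F (-(n : ℝ))) (F n) by
    rw [h1, h2]
    constructor <;> nlinarith)
  exact ⟨x, hx⟩

lemma apply_invFun (hF : AnalyticExpandingLift F d) (y : ℝ) : F (Function.invFun F y) = y :=
  Function.rightInverse_invFun hF.surjective y

lemma invFun_apply (hF : AnalyticExpandingLift F d) (x : ℝ) : Function.invFun F (F x) = x :=
  Function.leftInverse_invFun hF.injective x

lemma continuous_invFun (hF : AnalyticExpandingLift F d) : Continuous (Function.invFun F) := by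
  let e := hF.2.2.1.orderIsoOfSurjective F hF.surjective
  have : Function.invFun F = e.symm := by
    funext y
    apply e.injective
    rw [e.apply_symm_apply]
    exact hF.apply_invFun y
  rw [this]
  exact e.symm.continuous

lemma deriv_ne_zero (hF : AnalyticExpandingLift F d) (x : ℝ) : deriv F x ≠ 0 := by
  obtain ⟨C, hC, l, hl, h⟩ := hF.2.2.2.2.2
  have := h 1 le_rfl x
  simp only [Function.iterate_one] at this
  have h2 : 0 < C * l ^ 1 := by positivity
  exact abs_pos.1 (h2.trans_le this)

lemma hasDerivAt_invFun (hF : AnalyticExpandingLift F d) (y : ℝ) :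
    HasDerivAt (Function.invFun F) (deriv F (Function.invFun F y))⁻¹ y :=
  HasDerivAt.of_local_left_inverse hF.continuous_invFun.continuousAt
    (hF.differentiable _).hasDerivAt (hF.deriv_ne_zero _)
    (Eventually.of_forall hF.apply_invFun)

lemma cmap_coe (hF : AnalyticExpandingLift F d) (x : ℝ) :
    cmap F (x : Circle1) = ((F x : ℝ) : Circle1) := by
  have h : ((rep (x : Circle1) : ℝ) : Circle1) = (x : Circle1) :=
    (AddCircle.equivIco (1 : ℝ) 0).symm_apply_apply (x : Circle1)
  obtain ⟨k, hk⟩ := circle_coe_eq_coe_iff.1 h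
  unfold cmap
  conv_rhs => rw [← hk, hF.add_int]
  rw [circle_coe_eq_coe_iff]
  exact ⟨d * k, by push_cast; simp⟩

lemma continuous_cmap (hF : AnalyticExpandingLift F d) : Continuous (cmap F) := by
  have h : Continuous fun x : ℝ => cmap F (x : Circle1) := by
    simp only [hF.cmap_coe]
    exact (AddCircle.continuous_mk' 1).comp hF.continuous
  exact (QuotientAddGroup.isQuotientMap_mk _).continuous_iff.2 h

lemma apply_tauIter_succ (hF : AnalyticExpandingLift F d) (i : ℕ → Fin d) (n : ℕ) (x : ℝ) :
    F (tauIter F i (n + 1) x) = tauIter F i n x + ((i n : ℕ) : ℝ) :=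
  hF.apply_invFun _

lemma cmap_tauIter_succ (hF : AnalyticExpandingLift F d) (i : ℕ → Fin d) (n : ℕ) (x : ℝ) :
    cmap F (tauIter F i (n + 1) x : ℝ) = ((tauIter F i n x : ℝ) : Circle1) := by
  rw [hF.cmap_coe, hF.apply_tauIter_succ, circle_coe_eq_coe_iff]
  exact ⟨-(i n : ℕ), by push_cast; simp⟩

lemma exists_iterate_tauIter (hF : AnalyticExpandingLift F d) (i : ℕ → Fin d) (n : ℕ) :
    ∃ m : ℝ, ∀ x, F^[n] (tauIter F i n x) = x + m := by
  induction n with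
  | zero => exact ⟨0, fun x => by simp [tauIter]⟩
  | succ n ih =>
    obtain ⟨m, hm⟩ := ih
    refine ⟨m + d ^ n * (i n : ℕ), fun x => ?_⟩
    have := hF.iterate_add_int n (tauIter F i n x) (i n : ℕ)
    push_cast at this
    rw [Function.iterate_succ_apply, hF.apply_tauIter_succ, this, hm]
    ring

/-- Every preimage of `π(x)` is `π(τ_a(x))` for some letter `a`. -/
lemma exists_letter (hF : AnalyticExpandingLift F d) {w : Circle1} {x : ℝ}
    (h : cmap F w = (x : Circle1)) :
    ∃ a : Fin d, ((Function.invFun F (x + ((a : ℕ) : ℝ)) : ℝ) : Circle1) = w := by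
  induction w using QuotientAddGroup.induction_on with
  | H v =>
  have hd : 0 < d := by linarith [hF.2.2.2.2.1]
  have hd' : (0 : ℤ) < d := by exact_mod_cast hd
  rw [hF.cmap_coe] at h
  obtain ⟨k, hk⟩ := circle_coe_eq_coe_iff.1 h
  -- write `F v = x - k` and divide `-k = d q + r`
  have hr0 : 0 ≤ (-k) % d := Int.emod_nonneg _ hd'.ne'
  have hr1 : (-k) % d < d := Int.emod_lt_of_pos _ hd'
  have hdiv : (d : ℤ) * ((-k) / d) + (-k) % d = -k := Int.mul_ediv_add_emod _ _
  have hcast : ((((-k) % d).toNat : ℕ) : ℤ) = (-k) % d := Int.toNat_of_nonneg hr0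
  refine ⟨⟨((-k) % d).toNat, by omega⟩, ?_⟩
  have hFv : F (v + ((-((-k) / d) : ℤ) : ℝ)) = x + ((((-k) % d).toNat : ℕ) : ℝ) := by
    have h1 : ((((-k) % d).toNat : ℕ) : ℝ) = (((-k) % d : ℤ) : ℝ) := by exact_mod_cast hcast
    have h2 : (d : ℝ) * (((-k) / d : ℤ) : ℝ) + (((-k) % d : ℤ) : ℝ) = -k := by exact_mod_cast hdiv
    rw [hF.add_int, h1]
    push_cast
    linarith
  rw [← hFv, hF.invFun_apply, circle_coe_eq_coe_iff]
  exact ⟨(-k) / d, by push_cast; simp⟩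

end AnalyticExpandingLift

/-- The derivative of `τ_{i,n}` at `x`, as an explicit product of reciprocals of derivatives of `F`. -/
noncomputable def tauD (F : ℝ → ℝ) {d : ℕ} (i : ℕ → Fin d) : ℕ → ℝ → ℝ
  | 0, _ => 1
  | n + 1, x => (deriv F (tauIter F i (n + 1) x))⁻¹ * tauD F i n x

/-- The derivative of `h^f_i` at `x`, as a termwise differentiated series. -/
noncomputable def hDer (F : ℝ → ℝ) {d : ℕ} (f : Circle1 → ℝ) (i : ℕ → Fin d) (x : ℝ) : ℝ :=
  ∑' n : ℕ, deriv (fun t : ℝ => f (t : Circle1)) (tauIter F i (n + 1) x) * tauD F i (n + 1) x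

namespace AnalyticExpandingLift

variable {F : ℝ → ℝ} {d : ℕ}

lemma hasDerivAt_tauIter (hF : AnalyticExpandingLift F d) (i : ℕ → Fin d) (n : ℕ) (x : ℝ) :
    HasDerivAt (tauIter F i n) (tauD F i n x) x := by
  induction n with
  | zero => exact hasDerivAt_id x
  | succ n ih =>
    exact (hF.hasDerivAt_invFun (tauIter F i n x + ((i n : ℕ) : ℝ))).comp x
      (ih.add_const ((i n : ℕ) : ℝ))

/-- Exponential contraction of the inverse branches. -/
lemma exists_tauD_bound (hF : AnalyticExpandingLift F d) :
    ∃ B > (0 : ℝ), ∃ r : ℝ, 0 < r ∧ r < 1 ∧ ∀ (i : ℕ → Fin d) (n : ℕ) (x : ℝ),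
      |tauD F i (n + 1) x| ≤ B * r ^ n := by
  obtain ⟨C, hC, l, hl, h⟩ := hF.2.2.2.2.2
  have hl0 : 0 < l := by linarith
  refine ⟨(C * l)⁻¹, by positivity, l⁻¹, by positivity, inv_lt_one_of_one_lt₀ hl, ?_⟩
  intro i n x
  obtain ⟨m, hm⟩ := hF.exists_iterate_tauIter i (n + 1)
  have hd : Differentiable ℝ (F^[n + 1]) := hF.differentiable.iterate (n + 1)
  have h1 : HasDerivAt (fun x => F^[n + 1] (tauIter F i (n + 1) x))
      (deriv (F^[n + 1]) (tauIter F i (n + 1) x) * tauD F i (n + 1) x) x :=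
    (hd _).hasDerivAt.comp x (hF.hasDerivAt_tauIter i (n + 1) x)
  have h2 : HasDerivAt (fun x => F^[n + 1] (tauIter F i (n + 1) x)) 1 x := by
    simp only [hm]
    exact (hasDerivAt_id x).add_const m
  have h3 := congrArg abs (h1.unique h2)
  rw [abs_mul, abs_one] at h3
  have h4 := h (n + 1) (by omega) (tauIter F i (n + 1) x)
  have h5 : C * l ^ (n + 1) * |tauD F i (n + 1) x| ≤ 1 := by
    rw [← h3]
    gcongr
  have h6 : (C * l)⁻¹ * l⁻¹ ^ n = (C * l ^ (n + 1))⁻¹ := by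
    rw [pow_succ, inv_pow]
    field_simp
  rw [h6, ← one_div, le_div_iff₀ (by positivity)]
  linarith

lemma tendsto_tauIter_sub (hF : AnalyticExpandingLift F d) (i : ℕ → Fin d) (x y : ℝ) :
    Tendsto (fun n => tauIter F i n y - tauIter F i n x) atTop (𝓝 0) := by
  obtain ⟨B, hB, r, hr0, hr1, h⟩ := hF.exists_tauD_bound
  rw [← tendsto_add_atTop_iff_nat 1]
  have hlim : Tendsto (fun n : ℕ => B * r ^ n * ‖y - x‖) atTop (𝓝 0) := by
    simpa using ((tendsto_pow_atTop_nhds_zero_of_lt_one hr0.le hr1).const_mul B).mul_const ‖y - x‖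
  refine squeeze_zero_norm (fun n => ?_) hlim
  exact convex_univ.norm_image_sub_le_of_norm_hasDerivWithin_le
    (fun z _ => (hF.hasDerivAt_tauIter i (n + 1) z).hasDerivWithinAt)
    (fun z _ => h i n z) (mem_univ x) (mem_univ y)

lemma continuous_tauIter (hF : AnalyticExpandingLift F d) (n : ℕ) :
    Continuous fun p : (ℕ → Fin d) × ℝ => tauIter F p.1 n p.2 := by
  induction n with
  | zero => exact continuous_snd
  | succ n ih =>
    refine hF.continuous_invFun.comp (ih.add ?_)
    exact (continuous_of_discreteTopology (f := fun a : Fin d => ((a : ℕ) : ℝ))).comp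
      ((continuous_apply n).comp continuous_fst)

lemma continuous_tauD (hF : AnalyticExpandingLift F d) (n : ℕ) :
    Continuous fun p : (ℕ → Fin d) × ℝ => tauD F p.1 n p.2 := by
  induction n with
  | zero => exact continuous_const
  | succ n ih =>
    exact ((hF.continuous_deriv.comp (hF.continuous_tauIter (n + 1))).inv₀
      fun _ => hF.deriv_ne_zero _).mul ih

/-! ### The functions `h^f_i` -/

lemma exists_deriv_bound {f : Circle1 → ℝ} (hf : ContDiff ℝ 1 fun x : ℝ => f ↑x) :
    ∃ M : ℝ, ∀ x, |deriv (fun t : ℝ => f (t : Circle1)) x| ≤ M := by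
  have hper : Function.Periodic (deriv fun t : ℝ => f (t : Circle1)) 1 := by
    intro x
    rw [← deriv_comp_add_const]
    congr 1
    funext t
    rw [AddCircle.coe_add_period]
  obtain ⟨M, hM⟩ := (hper.isBounded_of_continuous one_ne_zero
    (hf.continuous_deriv le_rfl)).exists_norm_le
  exact ⟨M, fun x => hM _ ⟨x, rfl⟩⟩

lemma exists_term_bound (hF : AnalyticExpandingLift F d) {f : Circle1 → ℝ}
    (hf : ContDiff ℝ 1 fun x : ℝ => f ↑x) :
    ∃ u : ℕ → ℝ, Summable u ∧ ∀ (n : ℕ) (i : ℕ → Fin d) (x : ℝ),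
      ‖deriv (fun t : ℝ => f (t : Circle1)) (tauIter F i (n + 1) x) * tauD F i (n + 1) x‖
        ≤ u n := by
  obtain ⟨B, hB, r, hr0, hr1, h⟩ := hF.exists_tauD_bound
  obtain ⟨M, hM⟩ := exists_deriv_bound hf
  have hM0 : 0 ≤ M := (abs_nonneg _).trans (hM 0)
  refine ⟨fun n => M * (B * r ^ n),
    ((summable_geometric_of_lt_one hr0.le hr1).mul_left B).mul_left M, fun n i x => ?_⟩
  rw [norm_mul]
  exact mul_le_mul (hM _) (h i n x) (abs_nonneg _) hM0

lemma hasDerivAt_term (hF : AnalyticExpandingLift F d) {f : Circle1 → ℝ}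
    (hf : ContDiff ℝ 1 fun x : ℝ => f ↑x) (i : ℕ → Fin d) (n : ℕ) (x : ℝ) :
    HasDerivAt (fun x : ℝ => f ((tauIter F i (n + 1) x : ℝ) : Circle1)
        - f ((tauIter F i (n + 1) 0 : ℝ) : Circle1))
      (deriv (fun t : ℝ => f (t : Circle1)) (tauIter F i (n + 1) x) * tauD F i (n + 1) x) x := by
  have h1 : HasDerivAt (fun t : ℝ => f (t : Circle1))
      (deriv (fun t : ℝ => f (t : Circle1)) (tauIter F i (n + 1) x)) (tauIter F i (n + 1) x) :=
    (hf.differentiable one_ne_zero _).hasDerivAt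
  exact (h1.comp x (hF.hasDerivAt_tauIter i (n + 1) x)).sub_const _

lemma summable_hSum (hF : AnalyticExpandingLift F d) {f : Circle1 → ℝ}
    (hf : ContDiff ℝ 1 fun x : ℝ => f ↑x) (i : ℕ → Fin d) (x : ℝ) :
    Summable fun n => f ((tauIter F i (n + 1) x : ℝ) : Circle1)
        - f ((tauIter F i (n + 1) 0 : ℝ) : Circle1) := by
  obtain ⟨u, hu, hb⟩ := hF.exists_term_bound hf
  exact summable_of_summable_hasDerivAt hu (fun n y => hF.hasDerivAt_term hf i n y)
    (fun n y => hb n i y) (y₀ := 0) (by simp) x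

lemma hasDerivAt_hSum (hF : AnalyticExpandingLift F d) {f : Circle1 → ℝ}
    (hf : ContDiff ℝ 1 fun x : ℝ => f ↑x) (i : ℕ → Fin d) (x : ℝ) :
    HasDerivAt (hSum F i f) (hDer F f i x) x := by
  obtain ⟨u, hu, hb⟩ := hF.exists_term_bound hf
  exact hasDerivAt_tsum hu (fun n y => hF.hasDerivAt_term hf i n y)
    (fun n y => hb n i y) (y₀ := 0) (by simp) x

/-- `(h^f_i)'(x)` depends continuously on the pair `(i, x)`. -/
lemma continuous_hDer (hF : AnalyticExpandingLift F d) {f : Circle1 → ℝ}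
    (hf : ContDiff ℝ 1 fun x : ℝ => f ↑x) :
    Continuous fun p : (ℕ → Fin d) × ℝ => hDer F f p.1 p.2 := by
  obtain ⟨u, hu, hb⟩ := hF.exists_term_bound hf
  refine continuous_tsum (fun n => ?_) hu (fun n p => hb n p.1 p.2)
  exact ((hf.continuous_deriv le_rfl).comp (hF.continuous_tauIter (n + 1))).mul
    (hF.continuous_tauD (n + 1))

/-- If the backward orbit of `x` along `i` is calibrated by `g`, then `g - h^f_i` is minimal
at `x`. -/
lemma hSum_sub_le (hF : AnalyticExpandingLift F d) {f : Circle1 → ℝ}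
    (hf : ContDiff ℝ 1 fun x : ℝ => f ↑x) {g : Circle1 → ℝ} (hg : g ∈ Gset f (cmap F))
    {K : Set Circle1} (hK : K ⊆ Eset f (cmap F) g) {i : ℕ → Fin d} {x : ℝ}
    (hi : WordIn F i x K) (y : ℝ) :
    hSum F i f y - hSum F i f x ≤ g (y : Circle1) - g (x : Circle1) := by
  have hfin : ∀ n : ℕ, ∑ k ∈ Finset.range n, (f ((tauIter F i (k + 1) y : ℝ) : Circle1)
      - f ((tauIter F i (k + 1) x : ℝ) : Circle1))
      + (g ((tauIter F i n y : ℝ) : Circle1) - g ((tauIter F i n x : ℝ) : Circle1))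
      ≤ g (y : Circle1) - g (x : Circle1) := by
    intro n
    induction n with
    | zero => simp [tauIter]
    | succ n ih =>
      have h1 := hg.2.1.2 ((tauIter F i (n + 1) y : ℝ) : Circle1)
      have h2 : _ = _ := hK (hi (n + 1) (by omega))
      rw [hF.cmap_tauIter_succ] at h1 h2
      rw [Finset.sum_range_succ]
      linarith
  have hsum : HasSum (fun k => f ((tauIter F i (k + 1) y : ℝ) : Circle1)
      - f ((tauIter F i (k + 1) x : ℝ) : Circle1)) (hSum F i f y - hSum F i f x) := by
    have := (hF.summable_hSum hf i y).hasSum.sub (hF.summable_hSum hf i x).hasSum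
    refine this.congr_fun ?_
    intro k
    ring
  obtain ⟨⟨L, hL⟩, -⟩ := hg
  have hg0 : Tendsto (fun n => g ((tauIter F i n y : ℝ) : Circle1)
      - g ((tauIter F i n x : ℝ) : Circle1)) atTop (𝓝 0) := by
    have hlim : Tendsto (fun n => (L : ℝ) * ‖tauIter F i n y - tauIter F i n x‖) atTop (𝓝 0) := by
      simpa using (hF.tendsto_tauIter_sub i x y).norm.const_mul (L : ℝ)
    refine squeeze_zero_norm (fun n => ?_) hlim
    have h1 := hL.dist_le_mul ((tauIter F i n y : ℝ) : Circle1) ((tauIter F i n x : ℝ) : Circle1)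
    rw [dist_eq_norm, dist_eq_norm, ← AddCircle.coe_sub] at h1
    refine h1.trans ?_
    gcongr
    exact QuotientAddGroup.norm_mk_le_norm
  have := hsum.tendsto_sum_nat.add hg0
  rw [add_zero] at this
  exact le_of_tendsto' this hfin

end AnalyticExpandingLift

/-! ### Words of backward orbits in `K` and their one-sided limits -/

namespace AnalyticExpandingLift

variable {F : ℝ → ℝ} {d : ℕ}

lemma isClosed_wordIn (hF : AnalyticExpandingLift F d) {K : Set Circle1} (hK : IsClosed K) :
    IsClosed {p : (ℕ → Fin d) × ℝ | WordIn F p.1 p.2 K} := by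
  have : {p : (ℕ → Fin d) × ℝ | WordIn F p.1 p.2 K} = ⋂ n : ℕ, ⋂ _ : 1 ≤ n,
      (fun p : (ℕ → Fin d) × ℝ => ((tauIter F p.1 n p.2 : ℝ) : Circle1)) ⁻¹' K := by
    ext p
    simp [WordIn]
  rw [this]
  exact isClosed_iInter fun n => isClosed_iInter fun _ =>
    hK.preimage ((AddCircle.continuous_mk' 1).comp (hF.continuous_tauIter n))

/-- If every point of `K` has a preimage in `K`, any first backward step into `K` extends to a
full backward orbit in `K`. -/
lemma exists_wordIn (hF : AnalyticExpandingLift F d) {K : Set Circle1}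
    (hpre : ∀ z ∈ K, ∃ w ∈ K, cmap F w = z) (x : ℝ) (a : Fin d)
    (ha : ((Function.invFun F (x + ((a : ℕ) : ℝ)) : ℝ) : Circle1) ∈ K) :
    ∃ i : ℕ → Fin d, i 0 = a ∧ WordIn F i x K := by
  have hstep : ∀ t : ℝ, ∃ b : Fin d, (t : Circle1) ∈ K →
      ((Function.invFun F (t + ((b : ℕ) : ℝ)) : ℝ) : Circle1) ∈ K := by
    intro t
    by_cases ht : (t : Circle1) ∈ K
    · obtain ⟨w, hw, hwt⟩ := hpre _ ht
      obtain ⟨b, hb⟩ := hF.exists_letter hwt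
      exact ⟨b, fun _ => hb ▸ hw⟩
    · exact ⟨a, fun h => absurd h ht⟩
  choose L hL using hstep
  let st : ℝ → ℝ := fun t => Function.invFun F (t + ((L t : ℕ) : ℝ))
  let t₀ : ℝ := Function.invFun F (x + ((a : ℕ) : ℝ))
  let i : ℕ → Fin d := fun n => Nat.casesOn n a fun m => L (st^[m] t₀)
  have hi : ∀ n, tauIter F i (n + 1) x = st^[n] t₀ := by
    intro n
    induction n with
    | zero => rfl
    | succ n ih =>
      rw [tauIter, ih, Function.iterate_succ_apply']
  have hmem : ∀ n, ((st^[n] t₀ : ℝ) : Circle1) ∈ K := by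
    intro n
    induction n with
    | zero => exact ha
    | succ n ih =>
      rw [Function.iterate_succ_apply']
      exact hL _ ih
  refine ⟨i, rfl, fun n hn => ?_⟩
  obtain ⟨m, rfl⟩ : ∃ m, n = m + 1 := ⟨n - 1, by omega⟩
  rw [hi]
  exact hmem m

end AnalyticExpandingLift

/-- The mean value theorem without an ordering of the endpoints. -/
lemma exists_slope {h h' : ℝ → ℝ} (hh : ∀ t, HasDerivAt h (h' t) t) (x y : ℝ) :
    ∃ ξ, |ξ - x| ≤ |y - x| ∧ h y - h x = h' ξ * (y - x) := by
  have hc : Continuous h := continuous_iff_continuousAt.2 fun t => (hh t).continuousAt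
  rcases lt_trichotomy x y with hxy | rfl | hxy
  · obtain ⟨ξ, hξ, he⟩ := exists_hasDerivAt_eq_slope h h' hxy hc.continuousOn fun t _ => hh t
    refine ⟨ξ, ?_, ?_⟩
    · rw [abs_of_pos (by linarith [hξ.1]), abs_of_pos (by linarith)]
      linarith [hξ.2]
    · rw [he, div_mul_cancel₀]
      exact (sub_pos.2 hxy).ne'
  · exact ⟨x, by simp, by simp⟩
  · obtain ⟨ξ, hξ, he⟩ := exists_hasDerivAt_eq_slope h h' hxy hc.continuousOn fun t _ => hh t
    refine ⟨ξ, ?_, ?_⟩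
    · rw [abs_of_neg (by linarith [hξ.2]), abs_of_neg (by linarith)]
      linarith [hξ.1]
    · rw [he]
      have : x - y ≠ 0 := (sub_pos.2 hxy).ne'
      field_simp
      ring

namespace AnalyticExpandingLift

variable {F : ℝ → ℝ} {d : ℕ}

/-- Words of points of `K` tending to `x` from one side (the right if `s = 1`, the left if
`s = -1`) accumulate at a word of `x` whose `s * (h^f_i)'(x)` is maximal among all words of `x`:
this compares the minimality of `g - h^f_i` at nearby points with that of `g - h^f_j` at `x`. -/
lemma exists_extremal_word (hF : AnalyticExpandingLift F d) {f : Circle1 → ℝ}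
    (hf : ContDiff ℝ 1 fun x : ℝ => f ↑x) {g : Circle1 → ℝ} (hg : g ∈ Gset f (cmap F))
    {K : Set Circle1} (hK : K ⊆ Eset f (cmap F) g) (hKc : IsClosed K) (x s : ℝ) (hs : s * s = 1)
    (P : Set (Fin d))
    (hP : ∀ ε > 0, ∃ y, |y - x| < ε ∧ 0 < s * (y - x) ∧ ∃ i, WordIn F i y K ∧ i 0 ∈ P) :
    ∃ i, WordIn F i x K ∧ i 0 ∈ P ∧
      ∀ j : ℕ → Fin d, WordIn F j x K → s * hDer F f j x ≤ s * hDer F f i x := by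
  choose y hy hys w hw hwP using fun n : ℕ => hP (1 / ((n : ℝ) + 1)) (by positivity)
  have hy0 : Tendsto (fun n => |y n - x|) atTop (𝓝 0) :=
    squeeze_zero (fun n => abs_nonneg _) (fun n => (hy n).le)
      tendsto_one_div_add_atTop_nhds_zero_nat
  -- any sequence squeezed between `x` and `y n` tends to `x`
  have hsq : ∀ ξ : ℕ → ℝ, (∀ n, |ξ n - x| ≤ |y n - x|) → Tendsto ξ atTop (𝓝 x) := by
    intro ξ hξ
    rw [tendsto_iff_dist_tendsto_zero]
    exact squeeze_zero (fun n => dist_nonneg) hξ hy0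
  obtain ⟨i, φ, hφ, hi⟩ := CompactSpace.tendsto_subseq w
  have hφt := hφ.tendsto_atTop
  refine ⟨i, ?_, ?_, fun j hj => ?_⟩
  · have hlim : Tendsto (fun n => (w (φ n), y (φ n))) atTop (𝓝 (i, x)) :=
      hi.prodMk_nhds ((hsq y fun n => le_rfl).comp hφt)
    exact (hF.isClosed_wordIn hKc).mem_of_tendsto hlim (Eventually.of_forall fun n => hw _)
  · have hcl : IsClosed ((fun v : ℕ → Fin d => v 0) ⁻¹' P) :=
      (isClosed_discrete P).preimage (continuous_apply 0)
    exact hcl.mem_of_tendsto hi (Eventually.of_forall fun n => hwP _)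
  · choose ξ hξ hξe using fun n => exists_slope (hF.hasDerivAt_hSum hf (w n)) x (y n)
    choose η hη hηe using fun n => exists_slope (hF.hasDerivAt_hSum hf j) x (y n)
    have hle : ∀ n, s * hDer F f j (η n) ≤ s * hDer F f (w n) (ξ n) := by
      intro n
      have h1 := hF.hSum_sub_le hf hg hK (hw n) x
      have h2 := hF.hSum_sub_le hf hg hK hj (y n)
      have h3 : hDer F f j (η n) * (y n - x) ≤ hDer F f (w n) (ξ n) * (y n - x) := by
        rw [← hξe, ← hηe]
        linarith
      have h4 : y n - x = s * (s * (y n - x)) := by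
        rw [← mul_assoc, hs, one_mul]
      rw [h4] at h3
      refine le_of_mul_le_mul_right ?_ (hys n)
      linarith
    have hcont := hF.continuous_hDer hf
    have hl1 : Tendsto (fun n => s * hDer F f j (η (φ n))) atTop (𝓝 (s * hDer F f j x)) :=
      ((hcont.tendsto (j, x)).comp
        (tendsto_const_nhds.prodMk_nhds ((hsq η hη).comp hφt))).const_mul s
    have hl2 : Tendsto (fun n => s * hDer F f (w (φ n)) (ξ (φ n))) atTop
        (𝓝 (s * hDer F f i x)) :=
      ((hcont.tendsto (i, x)).comp (hi.prodMk_nhds ((hsq ξ hξ).comp hφt))).const_mul s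
    exact le_of_tendsto_of_tendsto' hl1 hl2 fun n => hle _

/-- Unless `x` is supercritical, all points of `K` close to `x` on a given side use the same
first letter. -/
lemma exists_side_letter (hF : AnalyticExpandingLift F d) {f : Circle1 → ℝ}
    (hf : ContDiff ℝ 1 fun x : ℝ => f ↑x) {g : Circle1 → ℝ} (hg : g ∈ Gset f (cmap F))
    {K : Set Circle1} (hK : K ⊆ Eset f (cmap F) g) (hKc : IsClosed K) (x : ℝ)
    (hxK : (x : Circle1) ∈ K) (hx : ¬ IsSupercriticalValue F d f K x) (s : ℝ) (hs : s * s = 1) :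
    ∃ a : Fin d, ∃ ε > 0, ∀ y, |y - x| < ε → 0 < s * (y - x) →
      ∀ i : ℕ → Fin d, WordIn F i y K → i 0 = a := by
  by_contra! hcon
  have hd : 0 < d := by linarith [hF.2.2.2.2.1]
  obtain ⟨i, hi, -, himax⟩ := hF.exists_extremal_word hf hg hK hKc x s hs univ (by
    intro ε hε
    obtain ⟨y, h1, h2, i, h3, -⟩ := hcon ⟨0, hd⟩ ε hε
    exact ⟨y, h1, h2, i, h3, mem_univ _⟩)
  obtain ⟨j, hj, hji, hjmax⟩ := hF.exists_extremal_word hf hg hK hKc x s hs {i 0}ᶜ (by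
    intro ε hε
    obtain ⟨y, h1, h2, k, h3, h4⟩ := hcon (i 0) ε hε
    exact ⟨y, h1, h2, k, h3, h4⟩)
  have hs0 : s ≠ 0 := by
    rintro rfl
    simp at hs
  refine hx ⟨hxK, i, j, hi, hj, fun h => hji h.symm, ?_⟩
  rw [(hF.hasDerivAt_hSum hf i x).deriv, (hF.hasDerivAt_hSum hf j x).deriv]
  exact mul_left_cancel₀ hs0 (le_antisymm (hjmax i hi) (himax j hj))

/-! ### Regularity of critical values -/

/-- One-sided uniqueness of the first letter on both sides of `x` makes `π(x)` regular. -/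
lemma isRegular_of_side_letters (hF : AnalyticExpandingLift F d) {K : Set Circle1}
    (hpre : ∀ z ∈ K, ∃ w ∈ K, cmap F w = z) (x : ℝ)
    (hside : ∀ s : ℝ, s * s = 1 → ∃ a : Fin d, ∃ ε > 0, ∀ y, |y - x| < ε → 0 < s * (y - x) →
      ∀ i : ℕ → Fin d, WordIn F i y K → i 0 = a) :
    IsRegularCriticalValue (cmap F) K (x : Circle1) := by
  obtain ⟨ε, hε, hε2, hletter⟩ : ∃ ε > 0, ε ≤ 1 / 2 ∧ ∀ s : ℝ, s * s = 1 → ∃ a : Fin d,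
      ∀ y, |y - x| < ε → 0 < s * (y - x) → ∀ i : ℕ → Fin d, WordIn F i y K → i 0 = a := by
    obtain ⟨a, ε₁, h₁, ha⟩ := hside 1 (by norm_num)
    obtain ⟨b, ε₂, h₂, hb⟩ := hside (-1) (by norm_num)
    refine ⟨min (min ε₁ ε₂) (1 / 2), by positivity, min_le_right _ _, fun s hs => ?_⟩
    rcases mul_self_eq_one_iff.1 hs with rfl | rfl
    · exact ⟨a, fun y hy => ha y (by
        exact hy.trans_le ((min_le_left _ _).trans (min_le_left _ _)))⟩
    · exact ⟨b, fun y hy => hb y (by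
        exact hy.trans_le ((min_le_left _ _).trans (min_le_right _ _)))⟩
  have hopen : IsOpenMap ((↑) : ℝ → Circle1) := QuotientAddGroup.isOpenMap_coe
  -- the projection is injective on the interval of radius `1/2` around `x`
  let e := AddCircle.openPartialHomeomorphCoe (1 : ℝ) (x - 1 / 2)
  have hsrc : ∀ t, |t - x| < ε → t ∈ e.source := by
    intro t ht
    have := abs_lt.1 ht
    change t ∈ Ioo (x - 1 / 2) (x - 1 / 2 + 1)
    constructor <;> linarith
  have hlift : ∀ t, |t - x| < ε → e.symm (t : Circle1) = t := fun t ht => e.left_inv (hsrc t ht)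
  let V : ℝ → Set Circle1 := fun s =>
    (fun t : ℝ => (t : Circle1)) '' {t | |t - x| < ε ∧ 0 < s * (t - x)}
  have hVopen : ∀ s, IsOpen (V s) := by
    intro s
    refine hopen _ ?_
    have h1 : Continuous fun t : ℝ => |t - x| := by fun_prop
    have h2 : Continuous fun t : ℝ => s * (t - x) := by fun_prop
    exact (isOpen_lt h1 continuous_const).inter (isOpen_lt continuous_const h2)
  refine ⟨(fun t : ℝ => (t : Circle1)) '' Metric.ball x ε, ?_, ?_, ?_⟩
  · exact (hopen _ Metric.isOpen_ball).mem_nhds ⟨x, Metric.mem_ball_self hε, rfl⟩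
  · exact ((convex_ball x ε).isConnected ⟨x, Metric.mem_ball_self hε⟩).image _
      (AddCircle.continuous_mk' 1).continuousOn
  rintro b ⟨⟨y, hy, rfl⟩, hyx⟩
  have hyx' : y ≠ x := by
    rintro rfl
    exact hyx rfl
  have hyε : |y - x| < ε := hy
  obtain ⟨s, hs, hsy⟩ : ∃ s : ℝ, s * s = 1 ∧ 0 < s * (y - x) := by
    rcases lt_or_gt_of_ne hyx' with h | h
    · exact ⟨-1, by norm_num, by linarith⟩
    · exact ⟨1, by norm_num, by linarith⟩
  obtain ⟨a, ha⟩ := hletter s hs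
  have hbU : (y : Circle1) ∈ (fun t : ℝ => (t : Circle1)) '' Metric.ball x ε \ {(x : Circle1)} :=
    ⟨⟨y, hy, rfl⟩, hyx⟩
  have hcomp : connectedComponentIn
      ((fun t : ℝ => (t : Circle1)) '' Metric.ball x ε \ {(x : Circle1)}) (y : Circle1) ⊆ V s := by
    refine IsPreconnected.subset_left_of_subset_union (hVopen s) (hVopen (-s)) ?_ ?_
      ⟨_, mem_connectedComponentIn hbU, y, ⟨hyε, hsy⟩, rfl⟩ isPreconnected_connectedComponentIn
    · rw [Set.disjoint_left]
      rintro _ ⟨t, ⟨ht, hst⟩, rfl⟩ ⟨t', ⟨ht', hst'⟩, htt⟩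
      have : t' = t := by
        rw [← hlift t ht, ← hlift t' ht']
        exact congrArg e.symm htt
      subst this
      linarith
    · refine (connectedComponentIn_subset _ _).trans ?_
      rintro _ ⟨⟨t, ht, rfl⟩, htx⟩
      have htx' : t - x ≠ 0 := by
        intro h
        apply htx
        rw [sub_eq_zero.1 h]
        rfl
      have hs0 : s ≠ 0 := by
        rintro rfl
        simp at hs
      rcases lt_or_gt_of_ne (mul_ne_zero hs0 htx') with h | h
      · exact Or.inr ⟨t, ⟨ht, by linarith⟩, rfl⟩
      · exact Or.inl ⟨t, ⟨ht, h⟩, rfl⟩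
  refine ⟨fun z => ((Function.invFun F (e.symm z + ((a : ℕ) : ℝ)) : ℝ) : Circle1), ?_, ?_, ?_⟩
  · refine ContinuousOn.mono ?_ hcomp
    have h1 : ContinuousOn e.symm (V s) := by
      refine e.continuousOn_symm.mono ?_
      rintro _ ⟨t, ⟨ht, -⟩, rfl⟩
      exact e.map_source (hsrc t ht)
    exact ((AddCircle.continuous_mk' 1).comp hF.continuous_invFun).comp_continuousOn
      (h1.add continuousOn_const)
  · intro z hz
    obtain ⟨t, ⟨ht, -⟩, rfl⟩ := hcomp hz
    simp only [hlift t ht]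
    rw [hF.cmap_coe, hF.apply_invFun, circle_coe_eq_coe_iff]
    exact ⟨-(a : ℕ), by push_cast; simp⟩
  · rintro z ⟨hzK, hz⟩
    obtain ⟨t, ⟨ht, hst⟩, rfl⟩ := hcomp hz
    simp only [hlift t ht] at hzK ⊢
    have huniq : ∀ w ∈ K, cmap F w = (t : Circle1) →
        w = ((Function.invFun F (t + ((a : ℕ) : ℝ)) : ℝ) : Circle1) := by
      intro w hw hwt
      obtain ⟨b, hb⟩ := hF.exists_letter hwt
      obtain ⟨i, hi0, hi⟩ := hF.exists_wordIn hpre t b (hb ▸ hw)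
      have : b = a := hi0 ▸ ha t ht hst i hi
      rw [← hb, this]
    obtain ⟨w, hw, hwt⟩ := hpre _ hzK
    apply Subset.antisymm
    · rintro v ⟨hv, hvK⟩
      exact huniq v hvK hv
    · rintro v rfl
      rw [← huniq w hw hwt]
      exact ⟨hwt, hw⟩

end AnalyticExpandingLift

/-- Corollary 3.6: if `(f,T)` has a unique maximizing measure, then either `T|K(f,T)` is
Sturmian-like or `f` has a supercritical value. -/
theorem sturmian_or_supercritical (F : ℝ → ℝ) (d : ℕ) (hF : AnalyticExpandingLift F d)
    (f : Circle1 → ℝ) (hf : ContDiff ℝ 1 fun x : ℝ => f ↑x)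
    (huniq : ∃! μ : Measure Circle1, IsMaximizing f (cmap F) μ) :
    SturmianLike (cmap F) (Kset f (cmap F)) ∨
      ∃ x : ℝ, IsSupercriticalValue F d f (Kset f (cmap F)) x := by
  by_cases hsuper : ∃ x : ℝ, IsSupercriticalValue F d f (Kset f (cmap F)) x
  · exact Or.inr hsuper
  left
  rintro x ⟨hxK, -⟩
  -- `K` is nonempty, so there is a Lipschitz calibrated sub-action
  obtain ⟨g, hg, -⟩ := mem_iUnion₂.1 hxK
  have hT := hF.continuous_cmap
  have hfc : Continuous f := (QuotientAddGroup.isQuotientMap_mk _).continuous_iff.2 hf.continuous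
  have hgc : Continuous g := hg.2.1.1
  rw [Kset_eq_Lambda hT hfc huniq hg] at hxK hsuper ⊢
  induction x using QuotientAddGroup.induction_on with
  | H x =>
  exact hF.isRegular_of_side_letters (fun z hz => exists_preimage_Lambda hT hfc hgc hz) x
    fun s hs => hF.exists_side_letter hf hg (Lambda_subset_Eset f (cmap F) g)
      (isClosed_Lambda hT hfc hgc) x hxK (fun h => hsuper ⟨x, h⟩) s hs
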